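/- Let p ∈ [1, ∞), and let ν_n (n ≥ 1) and ν be Borel probability measures on the separable Banach space L^p(0,1) such that ν_n converges weakly to ν as n → ∞. Then the pushforward measures (I_m)_* ν_n converge weakly to ν as n, m → ∞ jointly: for every bounded continuous function φ : L^p(0,1) → ℝ and every ε > 0, there exists N such that |∫ φ(I_m(h)) dν_n(h) − ∫ φ(h) dν(h)| < ε whenever n ≥ N and m ≥ N. In particular, if a sequence of L^p(0,1)-valued random elements Q_n converges weakly (in distribution) to a random element Q, then I_m(Q_n) converges weakly to Q in L^p(0,1) as n, m → ∞. -/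

import Mathlib

open MeasureTheory Filter Set
open scoped BoundedContinuousFunction ProbabilityTheory

noncomputable section

/-- Density of the Beta(j, m-j+1) distribution. -/
def betaDens (m j : ℕ) (u : ℝ) : ℝ :=
  (m : ℝ) * ((m - 1).choose (j - 1) : ℝ) * u ^ (j - 1) * (1 - u) ^ (m - j)

/-- Quantile function (left-continuous generalized inverse). -/
def quantile (G : ℝ → ℝ) (p : ℝ) : ℝ :=
  sInf {x : ℝ | p ≤ G x}

/-- `G` is a cumulative distribution function on ℝ. -/
structure IsCDF (G : ℝ → ℝ) : Prop where
  mono : Monotone G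
  rightCont : ∀ x, ContinuousWithinAt G (Ici x) x
  tendsto_atBot : Tendsto G atBot (nhds 0)
  tendsto_atTop : Tendsto G atTop (nhds 1)

/-- `G` has finite mean: its quantile function is integrable on (0,1). -/
def HasFiniteMean (G : ℝ → ℝ) : Prop :=
  IntegrableOn (fun u => quantile G u) (Ioo (0:ℝ) 1)

/-- Expected j-th order statistic from a sample of size m drawn from G. -/
def muOS (m j : ℕ) (G : ℝ → ℝ) : ℝ :=
  ∫ u in Ioo (0:ℝ) 1, quantile G u * betaDens m j u

/-- The Hoeffding CDF operator `H_m`. -/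
def hoeffCDF (m : ℕ) (G : ℝ → ℝ) (x : ℝ) : ℝ :=
  (m : ℝ)⁻¹ * ∑ j ∈ Finset.Icc 1 m, if muOS m j G ≤ x then (1:ℝ) else 0

/-- The quantile-Hoeffding operator `I_m`. -/
def quantHoeff (m : ℕ) (h : ℝ → ℝ) (u : ℝ) : ℝ :=
  ∑ j ∈ Finset.Icc 1 m,
    (∫ t in Ioo (0:ℝ) 1, h t * betaDens m j t) *
      (if u ∈ Ioc (((j : ℝ) - 1) / m) ((j : ℝ) / m) then (1:ℝ) else 0)

/-- Empirical CDF of the reals `x 0, ..., x (n-1)`. -/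
def ecdf (n : ℕ) (x : ℕ → ℝ) (t : ℝ) : ℝ :=
  (n : ℝ)⁻¹ * ∑ i ∈ Finset.range n, if x i ≤ t then (1:ℝ) else 0

/-- Empirical CDF of the random sample `X 0, ..., X (n-1)`. -/
def empCDF {Ω : Type*} (X : ℕ → Ω → ℝ) (n : ℕ) (ω : Ω) : ℝ → ℝ :=
  fun t => (n : ℝ)⁻¹ * ∑ i ∈ Finset.range n, if X i ω ≤ t then (1:ℝ) else 0

/-- Lebesgue measure restricted to the interval (0,1). -/
def measIoo : Measure ℝ := volume.restrict (Ioo (0:ℝ) 1)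

/-!
On a cell `((j - 1) / m, j / m]` the operator `I_m` takes the value `∫ h dP_j`, where `P_j` is the
law of the `j`-th order statistic of `m` independent uniform variables. These laws average to the
uniform law, so Jensen's inequality makes `I_m` a contraction of every `L^p`. The law `P_j` has mean
`j / (m + 1)` and variance `O(1 / m)`, so `I_m g → g` uniformly for continuous `g`; by density and
equicontinuity, `I_m f → f` in `L^p` for every `f` when `p < ∞`.

Equicontinuity upgrades this to `I_m f' → f` as `m → ∞` and `f' → f` jointly. For open `G` the sets
`interior {f | ∀ m ≥ k, I_m f ∈ G}` are then open and cover `G` as `k` grows, and the portmanteau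
theorem, applied to each of them and then combined with continuity from below, gives
`ν G ≤ liminf ν_n (I_m ⁻¹ G)`.
-/

section ExtendedContinuousMapping

variable {ι κ X Y : Type*} [TopologicalSpace X] {l : Filter ι} {L : Filter κ}

lemma tendsto_uncurry_of_equicontinuousAt [UniformSpace Y] {T : ι → X → Y} {x : X} {y : Y}
    (hT : EquicontinuousAt T x) (hy : Tendsto (T · x) l (nhds y)) :
    Tendsto (Function.uncurry T) (l ×ˢ nhds x) (nhds y) := by
  rw [Uniform.tendsto_nhds_right, tendsto_def] at hy ⊢
  intro U hU
  obtain ⟨V, hV, hVU⟩ := comp_mem_uniformity_sets hU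
  filter_upwards [prod_mem_prod (hy V hV) (hT V hV)] with q hq
  exact hVU ⟨T q.1 x, hq.1, hq.2 q.1⟩

lemma preimage_subset_iUnion_interior [TopologicalSpace Y] {T : ι → X → Y} {T' : X → Y}
    {s : ℕ → Set ι} (hs : l.HasAntitoneBasis s)
    (hTT' : ∀ x, Tendsto (Function.uncurry T) (l ×ˢ nhds x) (nhds (T' x)))
    {G : Set Y} (hG : IsOpen G) :
    T' ⁻¹' G ⊆ ⋃ k, interior {x | ∀ i ∈ s k, T i x ∈ G} := by
  intro x hx
  obtain ⟨⟨k, V⟩, ⟨-, hV⟩, hsub⟩ :=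
    (hs.toHasBasis.prod (nhds x).basis_sets).mem_iff.1 (hTT' x (hG.mem_nhds hx))
  refine mem_iUnion.2 ⟨k, mem_interior_iff_mem_nhds.2 (mem_of_superset hV fun z hz i hi => ?_)⟩
  exact hsub (mk_mem_prod hi hz)

variable [MeasurableSpace X] [OpensMeasurableSpace X] [HasOuterApproxClosed X]
  {μ : κ → ProbabilityMeasure X} {μ' : ProbabilityMeasure X}

lemma measure_interior_le_liminf_measure_preimage (hμ : Tendsto μ L (nhds μ')) (T : ι → X → Y)
    (G : Set Y) {s : Set ι} (hs : s ∈ l) :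
    (μ' : Measure X) (interior {x | ∀ i ∈ s, T i x ∈ G}) ≤
      (L ×ˢ l).liminf fun q => (μ q.1 : Measure X) (T q.2 ⁻¹' G) :=
  calc (μ' : Measure X) (interior {x | ∀ i ∈ s, T i x ∈ G})
      ≤ (L ×ˢ l).liminf fun q => (μ q.1 : Measure X) (interior {x | ∀ i ∈ s, T i x ∈ G}) :=
        ProbabilityMeasure.le_liminf_measure_open_of_tendsto (hμ.comp tendsto_fst) isOpen_interior
    _ ≤ (L ×ˢ l).liminf fun q => (μ q.1 : Measure X) (T q.2 ⁻¹' G) :=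
        liminf_le_liminf <| (tendsto_snd.eventually hs).mono fun q hq =>
          measure_mono fun _ hx => interior_subset hx q.2 hq

variable [TopologicalSpace Y] [MeasurableSpace Y] [OpensMeasurableSpace Y]
  [l.IsCountablyGenerated] [L.IsCountablyGenerated] {T : ι → X → Y} {T' : X → Y}

theorem tendsto_map_of_tendsto_uncurry (hT : ∀ i, Measurable (T i)) (hT' : Measurable T')
    (hTT' : ∀ x, Tendsto (Function.uncurry T) (l ×ˢ nhds x) (nhds (T' x)))
    (hμ : Tendsto μ L (nhds μ')) :
    Tendsto (fun q : κ × ι => (μ q.1).map (hT q.2).aemeasurable) (L ×ˢ l)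
      (nhds (μ'.map hT'.aemeasurable)) := by
  refine tendsto_of_forall_isOpen_le_liminf' fun G hG => ?_
  simp only [ProbabilityMeasure.map_apply' _ _ hG.measurableSet]
  obtain ⟨s, hs⟩ := l.exists_antitone_basis
  have hmono : Monotone fun k => interior {x | ∀ i ∈ s k, T i x ∈ G} := fun k k' hk =>
    interior_mono fun _ hx i hi => hx i (hs.antitone hk hi)
  calc (μ' : Measure X) (T' ⁻¹' G)
      ≤ (μ' : Measure X) (⋃ k, interior {x | ∀ i ∈ s k, T i x ∈ G}) :=
        measure_mono (preimage_subset_iUnion_interior hs hTT' hG)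
    _ = ⨆ k, (μ' : Measure X) (interior {x | ∀ i ∈ s k, T i x ∈ G}) := hmono.measure_iUnion
    _ ≤ (L ×ˢ l).liminf fun q => (μ q.1 : Measure X) (T q.2 ⁻¹' G) :=
        iSup_le fun k => measure_interior_le_liminf_measure_preimage hμ T G (hs.mem k)

lemma tendsto_integral_comp_of_tendsto_uncurry (hT : ∀ i, Measurable (T i)) (hT' : Measurable T')
    (hTT' : ∀ x, Tendsto (Function.uncurry T) (l ×ˢ nhds x) (nhds (T' x)))
    (hμ : Tendsto μ L (nhds μ')) (φ : Y →ᵇ ℝ) :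
    Tendsto (fun q : κ × ι => ∫ x, φ (T q.2 x) ∂(μ q.1 : Measure X)) (L ×ˢ l)
      (nhds (∫ x, φ (T' x) ∂(μ' : Measure X))) := by
  have hint {S : X → Y} (hS : Measurable S) (ρ : ProbabilityMeasure X) :
      ∫ y, φ y ∂(ρ.map hS.aemeasurable : Measure Y) = ∫ x, φ (S x) ∂(ρ : Measure X) :=
    integral_map hS.aemeasurable φ.continuous.measurable.aestronglyMeasurable
  rw [← hint hT' μ']
  exact (ProbabilityMeasure.tendsto_iff_forall_integral_tendsto.1
    (tendsto_map_of_tendsto_uncurry hT hT' hTT' hμ) φ).congr fun q => hint (hT q.2) (μ q.1)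

end ExtendedContinuousMapping

section BetaDensity

instance : IsProbabilityMeasure measIoo := ⟨by simp [measIoo]⟩

lemma ae_measIoo_mem_Ioo : ∀ᵐ t ∂measIoo, t ∈ Ioo (0 : ℝ) 1 :=
  ae_restrict_mem measurableSet_Ioo

lemma integrable_measIoo_of_continuousOn {g : ℝ → ℝ} (hg : ContinuousOn g (Icc 0 1)) :
    Integrable g measIoo :=
  hg.integrableOn_Icc.mono_set Ioo_subset_Icc_self

lemma continuous_betaDens (m j : ℕ) : Continuous (betaDens m j) := by
  unfold betaDens
  fun_prop

lemma betaDens_nonneg (m j : ℕ) {t : ℝ} (ht : t ∈ Ioo (0 : ℝ) 1) : 0 ≤ betaDens m j t :=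
  mul_nonneg (mul_nonneg (by positivity) (pow_nonneg ht.1.le _))
    (pow_nonneg (sub_nonneg.2 ht.2.le) _)

lemma betaDens_add_one (a b : ℕ) (t : ℝ) :
    betaDens (a + b + 1) (a + 1) t = (a + b + 1) * (a + b).choose a * t ^ a * (1 - t) ^ b := by
  simp only [betaDens, add_tsub_cancel_right, Nat.add_sub_add_right, Nat.add_sub_cancel_left]
  push_cast
  ring

lemma exists_eq_add_one_of_mem_Icc {m j : ℕ} (hj : j ∈ Finset.Icc 1 m) :
    ∃ a b, j = a + 1 ∧ m = a + b + 1 := by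
  rw [Finset.mem_Icc] at hj
  exact ⟨j - 1, m - j, by lia, by lia⟩

lemma sum_betaDens (m : ℕ) (t : ℝ) : ∑ j ∈ Finset.Icc 1 m, betaDens m j t = m := by
  cases m with
  | zero => simp
  | succ k =>
    calc ∑ j ∈ Finset.Icc 1 (k + 1), betaDens (k + 1) j t
        = ∑ i ∈ Finset.range (k + 1), betaDens (k + 1) (i + 1) t := by
          rw [Finset.range_eq_Ico, Finset.sum_Ico_add' (betaDens (k + 1) · t)]
          rfl
      _ = (k + 1) * ∑ i ∈ Finset.range (k + 1), t ^ i * (1 - t) ^ (k - i) * k.choose i := by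
          rw [Finset.mul_sum]
          refine Finset.sum_congr rfl fun i _ => ?_
          simp only [betaDens, Nat.add_sub_cancel, Nat.add_sub_add_right]
          push_cast
          ring
      _ = ↑(k + 1) := by
          rw [← add_pow]
          simp

lemma mul_betaDens {m j : ℕ} (hj : j ∈ Finset.Icc 1 m) (t : ℝ) :
    t * betaDens m j t = j / (m + 1) * betaDens (m + 1) (j + 1) t := by
  obtain ⟨a, b, rfl, rfl⟩ := exists_eq_add_one_of_mem_Icc hj
  have hchoose : ((a + b + 1 : ℕ) : ℝ) * (a + b).choose a =
      (a + b + 1).choose (a + 1) * (a + 1 : ℕ) := mod_cast Nat.add_one_mul_choose_eq (a + b) a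
  have hsucc := betaDens_add_one (a + 1) b t
  rw [show a + 1 + b = a + b + 1 by ring] at hsucc
  rw [betaDens_add_one, hsucc]
  push_cast at hchoose ⊢
  field_simp
  linear_combination (a + b + 2) * t ^ (a + 1) * (1 - t) ^ b * hchoose

lemma one_div_beta_add_one (a b : ℕ) :
    1 / ProbabilityTheory.beta (a + 1) (b + 1) = (a + b + 1) * (a + b).choose a := by
  have hGamma : Real.Gamma (a + 1 + (b + 1)) = (a + b + 1) * (a + b).factorial := by
    rw [show (a + 1 + (b + 1) : ℝ) = ((a + b + 1 : ℕ) : ℝ) + 1 by push_cast; ring,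
      Real.Gamma_nat_eq_factorial, Nat.factorial_succ]
    push_cast
    ring
  rw [ProbabilityTheory.beta, hGamma, Real.Gamma_nat_eq_factorial, Real.Gamma_nat_eq_factorial,
    Nat.cast_add_choose]
  field_simp

end BetaDensity

section OrderStatLaw

variable {m j : ℕ}

/-- The law of the `j`-th order statistic of `m` independent uniform variables on `(0, 1)`. -/
def orderStatLaw (m j : ℕ) : Measure ℝ :=
  measIoo.withDensity fun t => ENNReal.ofReal (betaDens m j t)

lemma orderStatLaw_eq_betaMeasure (a b : ℕ) :
    orderStatLaw (a + b + 1) (a + 1) = ProbabilityTheory.betaMeasure (a + 1) (b + 1) := by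
  rw [orderStatLaw, measIoo, ← withDensity_indicator measurableSet_Ioo,
    ProbabilityTheory.betaMeasure]
  congr 1
  ext t
  by_cases ht : t ∈ Ioo (0 : ℝ) 1
  · rw [indicator_of_mem ht, ProbabilityTheory.betaPDF_of_pos_lt_one ht.1 ht.2,
      one_div_beta_add_one, betaDens_add_one]
    simp only [add_sub_cancel_right, Real.rpow_natCast]
  · rw [indicator_of_notMem ht, ProbabilityTheory.betaPDF_eq, if_neg (by exact ht),
      ENNReal.ofReal_zero]

lemma isProbabilityMeasure_orderStatLaw (hj : j ∈ Finset.Icc 1 m) :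
    IsProbabilityMeasure (orderStatLaw m j) := by
  obtain ⟨a, b, rfl, rfl⟩ := exists_eq_add_one_of_mem_Icc hj
  rw [orderStatLaw_eq_betaMeasure]
  exact ProbabilityTheory.isProbabilityMeasureBeta (by positivity) (by positivity)

lemma orderStatLaw_absolutelyContinuous (m j : ℕ) : orderStatLaw m j ≪ measIoo :=
  withDensity_absolutelyContinuous _ _

lemma integral_orderStatLaw (m j : ℕ) (f : ℝ → ℝ) :
    ∫ t, f t ∂orderStatLaw m j = ∫ t in Ioo (0 : ℝ) 1, f t * betaDens m j t := by
  rw [orderStatLaw, integral_withDensity_eq_integral_toReal_smul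
    (continuous_betaDens m j).measurable.ennreal_ofReal
    (ae_of_all _ fun _ => ENNReal.ofReal_lt_top)]
  refine setIntegral_congr_fun measurableSet_Ioo fun t ht => ?_
  simp only [ENNReal.toReal_ofReal (betaDens_nonneg m j ht), smul_eq_mul, mul_comm]

lemma sum_orderStatLaw (m : ℕ) :
    ∑ j ∈ Finset.Icc 1 m, orderStatLaw m j = (m : ENNReal) • measIoo := by
  have hdens : ∀ᵐ t ∂measIoo, ∑ j ∈ Finset.Icc 1 m, ENNReal.ofReal (betaDens m j t) = m := by
    filter_upwards [ae_measIoo_mem_Ioo] with t ht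
    rw [← ENNReal.ofReal_sum_of_nonneg fun j _ => betaDens_nonneg m j ht, sum_betaDens,
      ENNReal.ofReal_natCast]
  ext s hs
  calc (∑ j ∈ Finset.Icc 1 m, orderStatLaw m j) s
      = ∑ j ∈ Finset.Icc 1 m, ∫⁻ t in s, ENNReal.ofReal (betaDens m j t) ∂measIoo := by
        simp only [Measure.coe_finsetSum, Finset.sum_apply, orderStatLaw, withDensity_apply _ hs]
    _ = ∫⁻ t in s, ∑ j ∈ Finset.Icc 1 m, ENNReal.ofReal (betaDens m j t) ∂measIoo :=
        (lintegral_finsetSum _ fun j _ =>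
          (continuous_betaDens m j).measurable.ennreal_ofReal).symm
    _ = ∫⁻ _ in s, m ∂measIoo := lintegral_congr_ae (ae_restrict_of_ae hdens)
    _ = ((m : ENNReal) • measIoo) s := by
        rw [setLIntegral_const, Measure.smul_apply, smul_eq_mul]

lemma orderStatLaw_le (hj : j ∈ Finset.Icc 1 m) : orderStatLaw m j ≤ (m : ENNReal) • measIoo := by
  rw [← sum_orderStatLaw]
  exact Finset.single_le_sum (fun _ _ => Measure.zero_le _) hj

lemma integrable_orderStatLaw {f : ℝ → ℝ} (hf : Integrable f measIoo) (hj : j ∈ Finset.Icc 1 m) :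
    Integrable f (orderStatLaw m j) :=
  (hf.smul_measure (ENNReal.natCast_ne_top m)).mono_measure (orderStatLaw_le hj)

lemma integral_mul_orderStatLaw (hj : j ∈ Finset.Icc 1 m) (f : ℝ → ℝ) :
    ∫ t, t * f t ∂orderStatLaw m j = j / (m + 1) * ∫ t, f t ∂orderStatLaw (m + 1) (j + 1) := by
  simp only [integral_orderStatLaw]
  rw [← integral_const_mul]
  congr with t
  linear_combination f t * mul_betaDens hj t

lemma integral_id_orderStatLaw (hj : j ∈ Finset.Icc 1 m) :
    ∫ t, t ∂orderStatLaw m j = j / (m + 1) := by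
  have := isProbabilityMeasure_orderStatLaw (m := m + 1) (j := j + 1)
    (by simp only [Finset.mem_Icc] at hj ⊢; lia)
  simpa using integral_mul_orderStatLaw hj fun _ => 1

lemma integral_sub_sq_orderStatLaw (hj : j ∈ Finset.Icc 1 m) (u : ℝ) :
    ∫ t, (t - u) ^ 2 ∂orderStatLaw m j = j / (m + 1) * ((j + 1) / (m + 2) - 2 * u) + u ^ 2 := by
  have hj' : j + 1 ∈ Finset.Icc 1 (m + 1) := by simp only [Finset.mem_Icc] at hj ⊢; lia
  have := isProbabilityMeasure_orderStatLaw hj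
  have := isProbabilityMeasure_orderStatLaw hj'
  have hint {g : ℝ → ℝ} (hg : Continuous g) {m j : ℕ} (hj : j ∈ Finset.Icc 1 m) :
      Integrable g (orderStatLaw m j) :=
    integrable_orderStatLaw (integrable_measIoo_of_continuousOn hg.continuousOn) hj
  calc ∫ t, (t - u) ^ 2 ∂orderStatLaw m j
      = ∫ t, t * (t - 2 * u) ∂orderStatLaw m j + u ^ 2 := by
        rw [show (fun t : ℝ => (t - u) ^ 2) = fun t => t * (t - 2 * u) + u ^ 2 by ext; ring,
          integral_add (hint (by fun_prop) hj) (integrable_const _), integral_const]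
        simp
    _ = j / (m + 1) * (∫ t, t ∂orderStatLaw (m + 1) (j + 1) - 2 * u) + u ^ 2 := by
        rw [integral_mul_orderStatLaw hj,
          integral_sub (hint (g := fun t => t) (by fun_prop) hj') (integrable_const _),
          integral_const]
        simp
    _ = j / (m + 1) * ((j + 1) / (m + 2) - 2 * u) + u ^ 2 := by
        rw [integral_id_orderStatLaw hj']
        push_cast
        ring

end OrderStatLaw

section GridCell

variable {m j : ℕ} {u : ℝ}

/-- The `j`-th cell of the grid of mesh `1 / m` on `(0, 1]`, for `1 ≤ j ≤ m`. -/
def gridCell (m j : ℕ) : Set ℝ := Ioc (((j : ℝ) - 1) / m) ((j : ℝ) / m)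

lemma mem_gridCell_iff (hj : j ∈ Finset.Icc 1 m) : u ∈ gridCell m j ↔ ⌈u * m⌉₊ = j := by
  rw [Finset.mem_Icc] at hj
  have hm : (0 : ℝ) < m := by exact_mod_cast hj.1.trans hj.2
  rw [Nat.ceil_eq_iff (by lia), gridCell, mem_Ioc, div_lt_iff₀ hm, le_div_iff₀ hm,
    Nat.cast_sub hj.1, Nat.cast_one]

lemma measurableSet_gridCell (m j : ℕ) : MeasurableSet (gridCell m j) := measurableSet_Ioc

lemma pairwiseDisjoint_gridCell (m : ℕ) :
    ((Finset.Icc 1 m : Finset ℕ) : Set ℕ).PairwiseDisjoint (gridCell m) :=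
  fun _ hi _ hj hij => disjoint_left.2 fun _ hui huj =>
    hij (((mem_gridCell_iff hi).1 hui).symm.trans ((mem_gridCell_iff hj).1 huj))

lemma ceil_mul_mem_Icc (hm : 0 < m) (hu : u ∈ Ioc (0 : ℝ) 1) : ⌈u * m⌉₊ ∈ Finset.Icc 1 m := by
  have hm' : (0 : ℝ) < m := by exact_mod_cast hm
  exact Finset.mem_Icc.2 ⟨Nat.one_le_ceil_iff.2 (mul_pos hu.1 hm'),
    Nat.ceil_le.2 (mul_le_of_le_one_left hm'.le hu.2)⟩

lemma iUnion_gridCell (hm : 0 < m) : ⋃ j ∈ Finset.Icc 1 m, gridCell m j = Ioc (0 : ℝ) 1 := by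
  have hm' : (0 : ℝ) < m := by exact_mod_cast hm
  ext u
  simp only [mem_iUnion, exists_prop]
  refine ⟨?_, fun hu => ?_⟩
  · rintro ⟨j, hj, hju⟩
    obtain ⟨h1j, hjm⟩ : (1 : ℝ) ≤ j ∧ (j : ℝ) ≤ m := by exact_mod_cast Finset.mem_Icc.1 hj
    exact ⟨(div_nonneg (sub_nonneg.2 h1j) hm'.le).trans_lt hju.1,
      hju.2.trans ((div_le_one hm').2 hjm)⟩
  · have hj := ceil_mul_mem_Icc hm hu
    exact ⟨_, hj, (mem_gridCell_iff hj).2 rfl⟩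

lemma volume_gridCell (hm : 0 < m) (j : ℕ) : volume (gridCell m j) = (m : ENNReal)⁻¹ := by
  rw [gridCell, Real.volume_Ioc, show (j : ℝ) / m - (j - 1) / m = (m : ℝ)⁻¹ by ring,
    ENNReal.ofReal_inv_of_pos (by exact_mod_cast hm), ENNReal.ofReal_natCast]

lemma lintegral_measIoo_eq_sum_gridCell (hm : 0 < m) (F : ℝ → ENNReal) :
    ∫⁻ u, F u ∂measIoo = ∑ j ∈ Finset.Icc 1 m, ∫⁻ u in gridCell m j, F u := by
  rw [measIoo, Measure.restrict_congr_set Ioo_ae_eq_Ioc, ← iUnion_gridCell hm,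
    lintegral_biUnion_finset (pairwiseDisjoint_gridCell m) fun j _ => measurableSet_gridCell m j]

/-- The variance is `x * (1 - x) / (m + 2)`, and the mean `x = j / (m + 1)` lies in the closure of
the cell. -/
lemma integral_sub_sq_orderStatLaw_le (hj : j ∈ Finset.Icc 1 m) (hu : u ∈ gridCell m j) :
    ∫ t, (t - u) ^ 2 ∂orderStatLaw m j ≤ 2 / m := by
  obtain ⟨h1j, hjm⟩ : (1 : ℝ) ≤ j ∧ (j : ℝ) ≤ m := by exact_mod_cast Finset.mem_Icc.1 hj
  have hm : (0 : ℝ) < m := by linarith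
  set x : ℝ := j / (m + 1) with hx
  have hx_le : x ≤ j / m := by rw [hx]; gcongr; linarith
  have hle_x : (j - 1 : ℝ) / m ≤ x := by
    rw [hx, div_le_div_iff₀ hm (by positivity)]
    linarith
  have hdist : |x - u| ≤ 1 / m := by
    have hu' : (j - 1 : ℝ) / m < u ∧ u ≤ j / m := hu
    have hwidth : (j : ℝ) / m - (j - 1) / m = 1 / m := by ring
    rw [abs_le]
    constructor <;> linarith
  calc ∫ t, (t - u) ^ 2 ∂orderStatLaw m j = x * (1 - x) / (m + 2) + |x - u| ^ 2 := by
        rw [integral_sub_sq_orderStatLaw hj, sq_abs, hx]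
        field_simp
        ring
    _ ≤ 1 / m + (1 / m) ^ 2 := by
        gcongr ?_ / ?_ + ?_ ^ 2
        · nlinarith [sq_nonneg (x - 1 / 2)]
        · linarith
    _ ≤ 2 / m := by
        have h1m : (1 : ℝ) / m ≤ 1 := (div_le_one hm).2 (h1j.trans hjm)
        have h0m : (0 : ℝ) ≤ 1 / m := by positivity
        calc (1 : ℝ) / m + (1 / m) ^ 2 ≤ 1 / m + 1 / m := by nlinarith
          _ = 2 / m := by ring

end GridCell

section Operator

open scoped ENNReal

variable {m j : ℕ} {u : ℝ} {f g : ℝ → ℝ} {p : ℝ≥0∞}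

lemma quantHoeff_eq_sum_indicator (m : ℕ) (f : ℝ → ℝ) :
    quantHoeff m f = ∑ j ∈ Finset.Icc 1 m,
      (gridCell m j).indicator fun _ => ∫ t, f t ∂orderStatLaw m j := by
  ext u
  simp only [quantHoeff, gridCell, Finset.sum_apply, indicator_apply, integral_orderStatLaw,
    mul_ite, mul_one, mul_zero]

lemma quantHoeff_of_mem_gridCell (f : ℝ → ℝ) (hj : j ∈ Finset.Icc 1 m) (hu : u ∈ gridCell m j) :
    quantHoeff m f u = ∫ t, f t ∂orderStatLaw m j := by
  rw [quantHoeff_eq_sum_indicator, Finset.sum_apply, Finset.sum_eq_single_of_mem j hj,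
    indicator_of_mem hu]
  intro i hi hij
  exact indicator_of_notMem
    (fun hui => disjoint_left.1 (pairwiseDisjoint_gridCell m hi hj hij) hui hu) _

lemma measurable_quantHoeff (m : ℕ) (f : ℝ → ℝ) : Measurable (quantHoeff m f) := by
  rw [quantHoeff_eq_sum_indicator, Finset.sum_fn]
  exact Finset.measurable_sum _ fun j _ =>
    measurable_const.indicator (measurableSet_gridCell m j)

lemma quantHoeff_zero_left (f : ℝ → ℝ) : quantHoeff 0 f = 0 := by
  simp [quantHoeff_eq_sum_indicator]

lemma quantHoeff_congr_ae (m : ℕ) (h : f =ᵐ[measIoo] g) : quantHoeff m f = quantHoeff m g := by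
  simp only [quantHoeff_eq_sum_indicator,
    fun j => integral_congr_ae ((orderStatLaw_absolutelyContinuous m j).ae_eq h)]

lemma quantHoeff_add (m : ℕ) (hf : Integrable f measIoo) (hg : Integrable g measIoo) :
    quantHoeff m (f + g) = quantHoeff m f + quantHoeff m g := by
  simp only [quantHoeff_eq_sum_indicator, ← Finset.sum_add_distrib, Pi.add_apply]
  refine Finset.sum_congr rfl fun j hj => ?_
  rw [integral_add (integrable_orderStatLaw hf hj) (integrable_orderStatLaw hg hj)]
  exact indicator_add _ _ _

lemma quantHoeff_const_smul (m : ℕ) (c : ℝ) (f : ℝ → ℝ) :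
    quantHoeff m (c • f) = c • quantHoeff m f := by
  simp only [quantHoeff_eq_sum_indicator, Finset.smul_sum, Pi.smul_apply, integral_smul]
  exact Finset.sum_congr rfl fun j _ => indicator_const_smul _ c _

lemma lintegral_comp_quantHoeff (hm : 0 < m) (f : ℝ → ℝ) (F : ℝ → ℝ≥0∞) :
    ∫⁻ u, F (quantHoeff m f u) ∂measIoo =
      (m : ℝ≥0∞)⁻¹ * ∑ j ∈ Finset.Icc 1 m, F (∫ t, f t ∂orderStatLaw m j) := by
  rw [lintegral_measIoo_eq_sum_gridCell hm, Finset.mul_sum]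
  refine Finset.sum_congr rfl fun j hj => ?_
  rw [setLIntegral_congr_fun (measurableSet_gridCell m j) fun u hu =>
    congrArg F (quantHoeff_of_mem_gridCell f hj hu), setLIntegral_const, volume_gridCell hm,
    mul_comm]

lemma enorm_integral_le_eLpNorm {α E : Type*} [MeasurableSpace α] [NormedAddCommGroup E]
    [NormedSpace ℝ E] {μ : Measure α} [IsProbabilityMeasure μ] {f : α → E}
    (hf : AEStronglyMeasurable f μ) (hp : 1 ≤ p) :
    ‖∫ x, f x ∂μ‖ₑ ≤ eLpNorm f p μ :=
  calc ‖∫ x, f x ∂μ‖ₑ ≤ ∫⁻ x, ‖f x‖ₑ ∂μ := enorm_integral_le_lintegral_enorm f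
    _ = eLpNorm f 1 μ := eLpNorm_one_eq_lintegral_enorm.symm
    _ ≤ eLpNorm f p μ := eLpNorm_le_eLpNorm_of_exponent_le hp hf

lemma enorm_integral_orderStatLaw_le (hj : j ∈ Finset.Icc 1 m) (hp : 1 ≤ p)
    (hf : AEStronglyMeasurable f measIoo) :
    ‖∫ t, f t ∂orderStatLaw m j‖ₑ ≤ eLpNorm f p (orderStatLaw m j) :=
  have := isProbabilityMeasure_orderStatLaw hj
  enorm_integral_le_eLpNorm (hf.mono_ac (orderStatLaw_absolutelyContinuous m j)) hp

lemma eLpNorm_nnreal_quantHoeff_le {q : NNReal} (hq : 1 ≤ q)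
    (hf : AEStronglyMeasurable f measIoo) (m : ℕ) :
    eLpNorm (quantHoeff m f) q measIoo ≤ eLpNorm f q measIoo := by
  obtain rfl | hm := m.eq_zero_or_pos
  · simp [quantHoeff_zero_left]
  have hq0 : q ≠ 0 := (zero_lt_one.trans_le hq).ne'
  rw [← ENNReal.rpow_le_rpow_iff (z := q) (by positivity), eLpNorm_nnreal_pow_eq_lintegral hq0,
    eLpNorm_nnreal_pow_eq_lintegral hq0]
  calc ∫⁻ u, ‖quantHoeff m f u‖ₑ ^ (q : ℝ) ∂measIoo
      = (m : ℝ≥0∞)⁻¹ * ∑ j ∈ Finset.Icc 1 m, ‖∫ t, f t ∂orderStatLaw m j‖ₑ ^ (q : ℝ) :=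
        lintegral_comp_quantHoeff hm f fun y => ‖y‖ₑ ^ (q : ℝ)
    _ ≤ (m : ℝ≥0∞)⁻¹ * ∑ j ∈ Finset.Icc 1 m, ∫⁻ t, ‖f t‖ₑ ^ (q : ℝ) ∂orderStatLaw m j := by
        gcongr with j hj
        rw [← eLpNorm_nnreal_pow_eq_lintegral hq0]
        gcongr
        exact enorm_integral_orderStatLaw_le hj (by exact_mod_cast hq) hf
    _ = (m : ℝ≥0∞)⁻¹ * (m * ∫⁻ t, ‖f t‖ₑ ^ (q : ℝ) ∂measIoo) := by
        rw [← lintegral_finsetSum_measure, sum_orderStatLaw, lintegral_smul_measure, smul_eq_mul]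
    _ = ∫⁻ t, ‖f t‖ₑ ^ (q : ℝ) ∂measIoo := by
        rw [← mul_assoc, ENNReal.inv_mul_cancel (by exact_mod_cast hm.ne')
          (ENNReal.natCast_ne_top m), one_mul]

lemma eLpNorm_top_quantHoeff_le (hf : AEStronglyMeasurable f measIoo) (m : ℕ) :
    eLpNorm (quantHoeff m f) ∞ measIoo ≤ eLpNorm f ∞ measIoo := by
  obtain rfl | hm := m.eq_zero_or_pos
  · simp [quantHoeff_zero_left]
  rw [eLpNorm_exponent_top]
  refine eLpNormEssSup_le_of_ae_enorm_bound ?_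
  filter_upwards [ae_measIoo_mem_Ioo] with u hu
  have hj := ceil_mul_mem_Icc hm (Ioo_subset_Ioc_self hu)
  rw [quantHoeff_of_mem_gridCell f hj ((mem_gridCell_iff hj).2 rfl)]
  exact (enorm_integral_orderStatLaw_le hj le_top hf).trans
    (eLpNormEssSup_mono_measure f (orderStatLaw_absolutelyContinuous m _))

theorem eLpNorm_quantHoeff_le (hp : 1 ≤ p) (hf : AEStronglyMeasurable f measIoo) (m : ℕ) :
    eLpNorm (quantHoeff m f) p measIoo ≤ eLpNorm f p measIoo := by
  induction p with
  | top => exact eLpNorm_top_quantHoeff_le hf m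
  | coe q => exact eLpNorm_nnreal_quantHoeff_le (by exact_mod_cast hp) hf m

lemma memLp_quantHoeff (hp : 1 ≤ p) (hf : MemLp f p measIoo) (m : ℕ) :
    MemLp (quantHoeff m f) p measIoo :=
  ⟨(measurable_quantHoeff m f).aestronglyMeasurable,
    (eLpNorm_quantHoeff_le hp hf.1 m).trans_lt hf.2⟩

variable (p) [Fact (1 ≤ p)]

/-- The quantile-Hoeffding operator `I_m` as a contraction of `L^p(0, 1)`. -/
def quantHoeffLp (m : ℕ) : Lp ℝ p measIoo →L[ℝ] Lp ℝ p measIoo :=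
  LinearMap.mkContinuous
    { toFun f := (memLp_quantHoeff Fact.out (Lp.memLp f) m).toLp (quantHoeff m f)
      map_add' f g := by
        rw [← MemLp.toLp_add]
        refine MemLp.toLp_congr _ _ (.of_eq ?_)
        rw [quantHoeff_congr_ae m (Lp.coeFn_add f g)]
        exact quantHoeff_add m ((Lp.memLp f).integrable Fact.out) ((Lp.memLp g).integrable Fact.out)
      map_smul' c f := by
        rw [RingHom.id_apply, ← MemLp.toLp_const_smul]
        refine MemLp.toLp_congr _ _ (.of_eq ?_)
        rw [quantHoeff_congr_ae m (Lp.coeFn_smul c f), quantHoeff_const_smul] }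
    1 fun f => by
      have hmem := memLp_quantHoeff Fact.out (Lp.memLp f) m
      rw [one_mul, Lp.norm_def f]
      exact (Lp.norm_toLp (quantHoeff m f) hmem).trans_le <|
        ENNReal.toReal_mono (Lp.eLpNorm_ne_top f)
          (eLpNorm_quantHoeff_le Fact.out (Lp.aestronglyMeasurable f) m)

lemma coeFn_quantHoeffLp (m : ℕ) (f : Lp ℝ p measIoo) :
    quantHoeffLp p m f =ᵐ[measIoo] quantHoeff m f :=
  (memLp_quantHoeff Fact.out (Lp.memLp f) m).coeFn_toLp

lemma equicontinuous_quantHoeffLp : Equicontinuous fun m => ⇑(quantHoeffLp p m) :=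
  (LipschitzWith.uniformEquicontinuous _ 1 fun m =>
    (quantHoeffLp p m).lipschitzWith_of_opNorm_le
      (LinearMap.mkContinuous_norm_le _ zero_le_one _)).equicontinuous

end Operator

section StrongConvergence

open scoped ENNReal

lemma exists_dist_le_add_mul_dist_sq {X Y : Type*} [PseudoMetricSpace X] [PseudoMetricSpace Y]
    {s : Set X} (hs : IsCompact s) {g : X → Y} (hg : ContinuousOn g s) {ε : ℝ} (hε : 0 < ε) :
    ∃ C, 0 ≤ C ∧ ∀ x ∈ s, ∀ y ∈ s, dist (g x) (g y) ≤ ε + C * dist x y ^ 2 := by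
  obtain ⟨δ, hδ, hclose⟩ :=
    Metric.uniformContinuousOn_iff.1 (hs.uniformContinuousOn_of_continuous hg) ε hε
  set D := Metric.diam (g '' s)
  have : 0 ≤ D := Metric.diam_nonneg
  refine ⟨D / δ ^ 2, by positivity, fun x hx y hy => ?_⟩
  obtain hxy | hxy := lt_or_ge (dist x y) δ
  · exact (hclose x hx y hy hxy).le.trans (le_add_of_nonneg_right (by positivity))
  · calc dist (g x) (g y) ≤ D :=
          Metric.dist_le_diam_of_mem (hs.image_of_continuousOn hg).isBounded
            (mem_image_of_mem g hx) (mem_image_of_mem g hy)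
      _ = D / δ ^ 2 * δ ^ 2 := by field_simp
      _ ≤ D / δ ^ 2 * dist x y ^ 2 := by gcongr
      _ ≤ ε + D / δ ^ 2 * dist x y ^ 2 := le_add_of_nonneg_left hε.le

lemma dist_quantHoeff_le {g : ℝ → ℝ} (hg : ContinuousOn g (Icc 0 1)) {ε C : ℝ} (hC : 0 ≤ C)
    (hmod : ∀ x ∈ Icc (0 : ℝ) 1, ∀ y ∈ Icc (0 : ℝ) 1, dist (g x) (g y) ≤ ε + C * dist x y ^ 2)
    {m : ℕ} (hm : 0 < m) {u : ℝ} (hu : u ∈ Ioc (0 : ℝ) 1) :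
    dist (quantHoeff m g u) (g u) ≤ ε + C * (2 / m) := by
  have hj := ceil_mul_mem_Icc hm hu
  have hcell := (mem_gridCell_iff hj).2 rfl
  set P := orderStatLaw m ⌈u * m⌉₊
  have : IsProbabilityMeasure P := isProbabilityMeasure_orderStatLaw hj
  have hbound : ∀ᵐ t ∂P, ‖g t - g u‖ ≤ ε + C * (t - u) ^ 2 := by
    filter_upwards [(orderStatLaw_absolutelyContinuous m _).ae_le ae_measIoo_mem_Ioo] with t ht
    simpa only [Real.dist_eq, sq_abs, Real.norm_eq_abs] using
      hmod t (Ioo_subset_Icc_self ht) u (Ioc_subset_Icc_self hu)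
  have hint {h : ℝ → ℝ} (hh : ContinuousOn h (Icc 0 1)) : Integrable h P :=
    integrable_orderStatLaw (integrable_measIoo_of_continuousOn hh) hj
  calc dist (quantHoeff m g u) (g u) = ‖∫ t, (g t - g u) ∂P‖ := by
        rw [quantHoeff_of_mem_gridCell g hj hcell, integral_sub (hint hg) (integrable_const _),
          integral_const, probReal_univ, one_smul, dist_eq_norm]
    _ ≤ ∫ t, (ε + C * (t - u) ^ 2) ∂P := norm_integral_le_of_norm_le (hint (by fun_prop)) hbound
    _ = ε + C * ∫ t, (t - u) ^ 2 ∂P := by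
        rw [integral_add (integrable_const _) (hint (by fun_prop)), integral_const, probReal_univ,
          one_smul, integral_const_mul]
    _ ≤ ε + C * (2 / m) := by
        gcongr
        exact integral_sub_sq_orderStatLaw_le hj hcell

theorem tendstoUniformlyOn_quantHoeff {g : ℝ → ℝ} (hg : ContinuousOn g (Icc 0 1)) :
    TendstoUniformlyOn (fun m => quantHoeff m g) g atTop (Ioc 0 1) := by
  refine Metric.tendstoUniformlyOn_iff.2 fun ε hε => ?_
  obtain ⟨C, hC, hmod⟩ := exists_dist_le_add_mul_dist_sq isCompact_Icc hg (half_pos hε)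
  have hlim : Tendsto (fun m : ℕ => ε / 2 + C * (2 / m)) atTop (nhds (ε / 2)) := by
    simpa using ((tendsto_const_div_atTop_nhds_zero_nat 2).const_mul C).const_add (ε / 2)
  filter_upwards [hlim.eventually_lt_const (half_lt_self hε), eventually_gt_atTop 0]
    with m hlt hm u hu
  rw [dist_comm]
  exact (dist_quantHoeff_le hg hC hmod hm hu).trans_lt hlt

variable (p : ℝ≥0∞) [Fact (1 ≤ p)]

lemma tendsto_quantHoeffLp_of_boundedContinuous (g : ℝ →ᵇ ℝ) :
    Tendsto (fun m => quantHoeffLp p m (g.toLp p measIoo ℝ)) atTop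
      (nhds (g.toLp p measIoo ℝ)) := by
  refine Metric.nhds_basis_closedBall.tendsto_right_iff.2 fun ε hε => ?_
  have hunif := Metric.tendstoUniformlyOn_iff.1
    (tendstoUniformlyOn_quantHoeff g.continuous.continuousOn) ε hε
  filter_upwards [hunif] with m hm
  have hae : ∀ᵐ u ∂measIoo,
      ‖(quantHoeffLp p m (g.toLp p measIoo ℝ) - g.toLp p measIoo ℝ : Lp ℝ p measIoo) u‖ ≤ ε := by
    filter_upwards [ae_measIoo_mem_Ioo, Lp.coeFn_sub (quantHoeffLp p m (g.toLp p measIoo ℝ)) _,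
      coeFn_quantHoeffLp p m (g.toLp p measIoo ℝ), g.coeFn_toLp p measIoo ℝ]
      with u hu hsub hquant hg
    rw [hsub, Pi.sub_apply, hquant, quantHoeff_congr_ae m (g.coeFn_toLp p measIoo ℝ), hg,
      ← dist_eq_norm, dist_comm]
    exact (hm u (Ioo_subset_Ioc_self hu)).le
  rw [Metric.mem_closedBall, dist_eq_norm]
  simpa [measureUnivNNReal] using Lp.norm_le_of_ae_bound hε.le hae

variable {p}

theorem tendsto_quantHoeffLp (hp : p ≠ ∞) (f : Lp ℝ p measIoo) :
    Tendsto (fun m => quantHoeffLp p m f) atTop (nhds f) := by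
  have hclosed : IsClosed {f : Lp ℝ p measIoo | Tendsto (quantHoeffLp p · f) atTop (nhds f)} :=
    (equicontinuous_quantHoeffLp p).isClosed_setOfPred_tendsto continuous_id
  have hdense := BoundedContinuousFunction.toLp_denseRange ℝ measIoo ℝ hp
  exact hclosed.closure_subset_iff.2 (range_subset_iff.2
    (tendsto_quantHoeffLp_of_boundedContinuous p)) (hdense f)

end StrongConvergence

/-- If Borel probability measures `ν_n` on `L^p(0,1)` converge weakly to `ν`, then the
pushforwards of `ν_n` under the quantile-Hoeffding operators `I_m` converge weakly to
`ν` as `n, m → ∞` jointly. -/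
theorem pushforward_quantHoeff_weak_convergence
    (pr : ℝ) (hpr : 1 ≤ pr) [Fact (1 ≤ ENNReal.ofReal pr)]
    [m0 : MeasurableSpace (Lp ℝ (ENNReal.ofReal pr) measIoo)]
    [BorelSpace (Lp ℝ (ENNReal.ofReal pr) measIoo)]
    (ν : ℕ → Measure (Lp ℝ (ENNReal.ofReal pr) measIoo))
    (νlim : Measure (Lp ℝ (ENNReal.ofReal pr) measIoo))
    [∀ n, IsProbabilityMeasure (ν n)] [IsProbabilityMeasure νlim]
    (Imap : ℕ → Lp ℝ (ENNReal.ofReal pr) measIoo → Lp ℝ (ENNReal.ofReal pr) measIoo)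
    (hImap : ∀ (m : ℕ) (f : Lp ℝ (ENNReal.ofReal pr) measIoo),
      (Imap m f : ℝ → ℝ) =ᵐ[measIoo] quantHoeff m (f : ℝ → ℝ))
    (hweak : ∀ φ : Lp ℝ (ENNReal.ofReal pr) measIoo →ᵇ ℝ,
      Tendsto (fun n : ℕ => ∫ h, φ h ∂(ν n)) atTop (nhds (∫ h, φ h ∂νlim))) :
    ∀ φ : Lp ℝ (ENNReal.ofReal pr) measIoo →ᵇ ℝ, ∀ ε > (0:ℝ), ∃ N : ℕ,
      ∀ n m : ℕ, N ≤ n → N ≤ m →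
        |(∫ h, φ (Imap m h) ∂(ν n)) - ∫ h, φ h ∂νlim| < ε := by
  let T := quantHoeffLp (ENNReal.ofReal pr)
  have hIT (m : ℕ) : Imap m = T m :=
    funext fun f => Lp.ext ((hImap m f).trans (coeFn_quantHoeffLp _ m f).symm)
  have hT (m : ℕ) : Measurable (T m) := (T m).continuous.measurable
  have hTid (f : Lp ℝ (ENNReal.ofReal pr) measIoo) :
      Tendsto (Function.uncurry fun m => T m) (atTop ×ˢ nhds f) (nhds (id f)) :=
    tendsto_uncurry_of_equicontinuousAt (equicontinuous_quantHoeffLp _ f)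
      (tendsto_quantHoeffLp ENNReal.ofReal_ne_top f)
  let μ (n : ℕ) : ProbabilityMeasure (Lp ℝ (ENNReal.ofReal pr) measIoo) := ⟨ν n, inferInstance⟩
  let μ' : ProbabilityMeasure (Lp ℝ (ENNReal.ofReal pr) measIoo) := ⟨νlim, inferInstance⟩
  have hμ : Tendsto μ atTop (nhds μ') :=
    ProbabilityMeasure.tendsto_iff_forall_integral_tendsto.2 hweak
  intro φ ε hε
  have hlim := tendsto_integral_comp_of_tendsto_uncurry hT measurable_id hTid hμ φ
  rw [prod_atTop_atTop_eq] at hlim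
  obtain ⟨N, hN⟩ := eventually_atTop_prod_self.1 (Metric.tendsto_nhds.1 hlim ε hε)
  refine ⟨N, fun n m hn hm => ?_⟩
  rw [hIT, ← Real.dist_eq]
  exact hN n m hn hm
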